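/- For each unordered pair {α,β} in {{123,231}, {123,312}, {132,321}, {213,321}} of patterns of length three, the number of permutations of {1,…,n} that contain α exactly once and contain β exactly once is s_n(∅;{α,β}) = 2n−5 for all n ≥ 5, and s_4(∅;{α,β}) = 2. -/

import Mathlib

/-- Number of occurrences of the pattern `α ∈ S_k` in the permutation `π ∈ S_n`:
the number of strictly increasing choices of `k` indices such that the corresponding
subword of `π` is order-isomorphic to `α`. -/
noncomputable def occCount {k n : ℕ} (α : Equiv.Perm (Fin k)) (π : Equiv.Perm (Fin n)) : ℕ :=
  Nat.card {f : Fin k → Fin n // StrictMono f ∧ ∀ a b : Fin k, α a < α b ↔ π (f a) < π (f b)}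

/-- `π` avoids the pattern `α`. -/
def avoids {k n : ℕ} (α : Equiv.Perm (Fin k)) (π : Equiv.Perm (Fin n)) : Prop :=
  occCount α π = 0

/-- `π` contains the pattern `α` exactly once. -/
def containsOnce {k n : ℕ} (α : Equiv.Perm (Fin k)) (π : Equiv.Perm (Fin n)) : Prop :=
  occCount α π = 1

/-- The pattern `123` (as a permutation of `Fin 3`, 0-indexed). -/
def p123 : Equiv.Perm (Fin 3) := ⟨![0,1,2], ![0,1,2], by decide, by decide⟩
/-- The pattern `132`. -/
def p132 : Equiv.Perm (Fin 3) := ⟨![0,2,1], ![0,2,1], by decide, by decide⟩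
/-- The pattern `213`. -/
def p213 : Equiv.Perm (Fin 3) := ⟨![1,0,2], ![1,0,2], by decide, by decide⟩
/-- The pattern `231`. -/
def p231 : Equiv.Perm (Fin 3) := ⟨![1,2,0], ![2,0,1], by decide, by decide⟩
/-- The pattern `312`. -/
def p312 : Equiv.Perm (Fin 3) := ⟨![2,0,1], ![1,2,0], by decide, by decide⟩
/-- The pattern `321`. -/
def p321 : Equiv.Perm (Fin 3) := ⟨![2,1,0], ![2,1,0], by decide, by decide⟩

/-- `s_n(α;β)`: the number of permutations of `{1,…,n}` that avoid `α` and contain `β`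
exactly once. -/
noncomputable def sAvoidContain (α β : Equiv.Perm (Fin 3)) (n : ℕ) : ℕ :=
  Nat.card {π : Equiv.Perm (Fin n) // avoids α π ∧ containsOnce β π}

/-- `s_n(∅;{α,β})`: the number of permutations of `{1,…,n}` that contain each of `α` and `β`
exactly once. -/
noncomputable def sContainBoth (α β : Equiv.Perm (Fin 3)) (n : ℕ) : ℕ :=
  Nat.card {π : Equiv.Perm (Fin n) // containsOnce α π ∧ containsOnce β π}

theorem key_case (n : ℕ) (hn : 6 ≤ n) (f : ℕ → ℕ)
    (inj : ∀ i j, i < n → j < n → f i = f j → i = j)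
    (m : ℕ) (hm : m + 1 < n) (hmax : ∀ i, i < n → i ≠ m → f i < f m)
    (e132 : ∃ i j k, i < j ∧ j < k ∧ k < n ∧ f i < f k ∧ f k < f j)
    (e321 : ∃ i j k, i < j ∧ j < k ∧ k < n ∧ f k < f j ∧ f j < f i)
    (u132 : ∀ i j k i' j' k', i < j → j < k → k < n → f i < f k → f k < f j →
      i' < j' → j' < k' → k' < n → f i' < f k' → f k' < f j' → i = i' ∧ j = j' ∧ k = k')
    (u321 : ∀ i j k i' j' k', i < j → j < k → k < n → f k < f j → f j < f i →
      i' < j' → j' < k' → k' < n → f k' < f j' → f j' < f i' → i = i' ∧ j = j' ∧ k = k') :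
    (∀ x y, x < y → y < n → (f y < f x ↔ (x = 0 ∨ (x = 2 ∧ y = 3)))) ∨
    (∀ x y, x < y → y < n → (f y < f x ↔ (y = n - 1 ∨ (x = 1 ∧ y = 2)))) := by
  have tri : ∀ i j, i < n → j < n → i ≠ j → f i < f j ∨ f j < f i := by
    intro i j hi hj hne
    rcases lt_trichotomy (f i) (f j) with h | h | h
    · exact Or.inl h
    · exact absurd (inj i j hi hj h) hne
    · exact Or.inr h
  obtain ⟨i, j, k, hij, hjk, hk, h1, h2⟩ := e132
  rcases Nat.eq_zero_or_pos m with hm0 | hm0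
  · left
    subst hm0
    have hi : i ≠ 0 := by
      intro h; subst h
      have := hmax k hk (by omega); omega
    have t0 := hmax j (by omega) (by omega)
    have inv : ∀ x y, 0 < x → x < y → y < n → f y < f x → x = j ∧ y = k := by
      intro x y hx hxy hy h
      have := u321 0 x y 0 j k hx hxy hy h (hmax x (by omega) (by omega)) (by omega) hjk hk h2 t0
      exact this.2
    have hkj : k = j + 1 := by
      by_contra hne
      have a := inv j (j+1) (by omega) (by omega) (by omega)
      have b := inv (j+1) k (by omega) (by omega) hk
      omega
    have uni : ∀ i', 0 < i' → i' < j → i' = i := by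
      intro i' hi' hlt
      have a := inv i' k hi' (by omega) hk
      have b := tri i' k (by omega) hk (by omega)
      exact (u132 i' j k i j k hlt hjk hk (by omega) h2 hij hjk hk h1 h2).1
    have hi1 := uni 1 (by omega) (by omega)
    have hj2 : j = 2 := by
      by_contra hne
      have := uni 2 (by omega) (by omega)
      omega
    intro x y hxy hy
    constructor
    · intro h
      by_cases hx : x = 0
      · exact Or.inl hx
      · have := inv x y (by omega) hxy hy h
        omega
    · rintro (h | ⟨h, h'⟩)
      · subst h; exact hmax y hy (by omega)
      · have : x = j := by omega
        have : y = k := by omega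
        rw [‹x = j›, ‹y = k›]; exact h2
  by_cases hp : ∃ x y, x < m ∧ m < y ∧ y < n ∧ f x < f y
  · exfalso
    obtain ⟨x, y, hx, hy, hyn, hxy⟩ := hp
    have hym := hmax y hyn (by omega)
    have only : ∀ i j k, i < j → j < k → k < n → f i < f k → f k < f j → i = x ∧ j = m ∧ k = y :=
      fun i j k a b c d e => u132 i j k x m y a b c d e hx hy hyn hxy hym
    have pair : ∀ x' y', x' < m → m < y' → y' < n → f x' < f y' → x' = x ∧ y' = y := by
      intro x' y' a b c d
      have := only x' m y' a b c d (hmax y' c (by omega))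
      exact ⟨this.1, this.2.2⟩
    have hxm : x + 1 = m := by
      by_contra hne
      have a := pair (x+1) y (by omega) hy hyn
      have b := tri (x+1) y (by omega) hyn (by omega)
      have := only x (x+1) y (by omega) (by omega) hyn hxy (by omega)
      omega
    obtain ⟨p, q, r, hpq, hqr, hr, g1, g2⟩ := e321
    rcases Nat.lt_or_ge m 2 with hm2 | hm2
    · have hm1 : m = 1 := by omega
      have hx0 : x = 0 := by omega
      subst hm1 hx0
      have hp1 : p = 1 := by
        by_contra hne
        have hq1 : q ≠ 1 := by
          rintro rfl
          have := hmax p (by omega) (by omega); omega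
        have := u321 p q r 1 q r hpq hqr hr g1 g2 (by omega) hqr hr g1 (hmax q (by omega) hq1)
        omega
      subst hp1
      have hqy : q = y := by
        by_contra hne
        have a := pair 0 q (by omega) (by omega) (by omega)
        have b := tri 0 q (by omega) (by omega) (by omega)
        have := u321 0 q r 1 q r (by omega) hqr hr g1 (by omega) hpq hqr hr g1 g2
        omega
      subst hqy
      have hr0 : f r < f 0 := by
        have a := pair 0 r (by omega) (by omega) (by omega)
        have b := tri 0 r (by omega) (by omega) (by omega)
        omega
      have hq2 : q = 2 := by
        by_contra hne
        rcases tri 2 r (by omega) hr (by omega) with h | h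
        · have := only 2 q r (by omega) hqr hr h g1
          omega
        · have := u321 1 2 r 1 q r (by omega) (by omega) hr h (hmax 2 (by omega) (by omega)) hpq hqr hr g1 g2
          omega
      subst hq2
      have last : ∀ u, 2 < u → u < n → u = r := by
        intro u hu hun
        have a := pair 0 u (by omega) (by omega) (by omega)
        have b := tri 0 u (by omega) (by omega) (by omega)
        exact (u321 1 2 u 1 2 r (by omega) hu hun (by omega) g2 hpq hqr hr g1 g2).2.2
      have := last 3 (by omega) (by omega)
      have := last 4 (by omega) (by omega)
      omega
    · have big : ∀ x' y', x' < x → m < y' → y' < n → f y' < f x' := by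
        intro x' y' a b c
        have d := pair x' y' (by omega) b c
        have e := tri x' y' (by omega) c (by omega)
        omega
      have binc : ∀ u v, m < u → u < v → v < n → f u < f v := by
        intro u v a b c
        rcases tri u v (by omega) c (by omega) with h | h
        · exact h
        · have := u321 0 u v m u v (by omega) b c h (big 0 u (by omega) a (by omega)) a b c h
            (hmax u (by omega) (by omega))
          omega
      by_cases hmn : m + 2 = n
      · have hy1 : y = m + 1 := by omega
        subst hy1
        have hbx : ∀ u, u < x → f x < f u := by
          intro u hu
          have := big u (m+1) hu (by omega) hyn
          omega
        have ainc : ∀ u v, u < v → v < x → f u < f v := by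
          intro u v a b
          rcases tri u v (by omega) (by omega) (by omega) with h | h
          · exact h
          · have := u321 u v x u v (m+1) a b (by omega) (hbx v b) h a (by omega) hyn
              (big v (m+1) b (by omega) hyn) h
            omega
        have hqm : q ≠ m := by
          rintro rfl
          have := hmax p (by omega) (by omega); omega
        rcases Nat.lt_or_ge q x with hqx | hqx
        · have := ainc p q hpq hqx; omega
        · have hqx' : q = x := by omega
          have : r = m ∨ r = m + 1 := by omega
          rcases this with rfl | rfl
          · have := hmax q (by omega) (by omega); omega
          · subst hqx'; omega
      · have hyl : y + 1 = n := by
          by_contra hne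
          have a := binc y (y+1) hy (by omega) (by omega)
          have := pair x (y+1) hx (by omega) (by omega) (by omega)
          omega
        have h3 : ∀ u v, u < x → m < v → v < y → f v < f x ∧ f x < f u := by
          intro u v a b c
          have d := pair x v hx b (by omega)
          have e := tri x v (by omega) (by omega) (by omega)
          have g := big u y a hy hyn
          omega
        have s0 := h3 0 (m+1) (by omega) (by omega) (by omega)
        by_cases hm3 : m = 2
        · have s1 := h3 0 (m+2) (by omega) (by omega) (by omega)
          have := u321 0 x (m+1) 0 x (m+2) (by omega) (by omega) (by omega) s0.1 s0.2
            (by omega) (by omega) (by omega) s1.1 s1.2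
          omega
        · have s1 := h3 1 (m+1) (by omega) (by omega) (by omega)
          have := u321 0 x (m+1) 1 x (m+1) (by omega) (by omega) (by omega) s0.1 s0.2
            (by omega) (by omega) (by omega) s1.1 s1.2
          omega
  · right
    push Not at hp
    have big : ∀ x y, x < m → m < y → y < n → f y < f x := by
      intro x y a b c
      have d := hp x y a b c
      have e := tri x y (by omega) c (by omega)
      omega
    have him : i < m := by
      by_contra hne
      have him' : i ≠ m := by
        rintro rfl
        have := hmax k hk (by omega); omega
      have := u321 0 j k m j k (by omega) hjk hk h2 (big 0 j hm0 (by omega) (by omega))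
        (by omega) hjk hk h2 (hmax j (by omega) (by omega))
      omega
    have hkm : k < m := by
      by_contra hne
      have : k ≠ m := by
        rintro rfl
        have := hmax j (by omega) (by omega); omega
      have := big i k him (by omega) hk
      omega
    have hmn : m + 2 = n := by
      by_contra hne
      have := u321 j k (m+1) j k (m+2) hjk (by omega) (by omega) (big k (m+1) hkm (by omega) (by omega)) h2
        hjk (by omega) (by omega) (big k (m+2) hkm (by omega) (by omega)) h2
      omega
    have inv : ∀ x y, x < y → y < m → f y < f x → x = j ∧ y = k := by
      intro x y hxy hy h
      have := u321 x y (m+1) j k (m+1) hxy (by omega) hm (big y (m+1) hy (by omega) hm) h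
        hjk (by omega) hm (big k (m+1) hkm (by omega) hm) h2
      exact ⟨this.1, this.2.1⟩
    have hkj : k = j + 1 := by
      by_contra hne
      have a := inv j (j+1) (by omega) (by omega)
      have b := inv (j+1) k (by omega) (by omega)
      have c := tri j (j+1) (by omega) (by omega) (by omega)
      omega
    have uni : ∀ i', i' < j → i' = i := by
      intro i' hlt
      have a := inv i' k (by omega) hkm
      have b := tri i' k (by omega) hk (by omega)
      exact (u132 i' j k i j k hlt hjk hk (by omega) h2 hij hjk hk h1 h2).1
    have hi1 := uni 0 (by omega)
    have hj2 : j = 1 := by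
      by_contra hne
      have := uni 1 (by omega)
      omega
    intro x y hxy hy
    constructor
    · intro h
      by_cases hym : y = n - 1
      · exact Or.inl hym
      · have hym' : y ≠ m := by
          rintro rfl
          have := hmax x (by omega) (by omega); omega
        have := inv x y hxy (by omega) h
        omega
    · rintro (h | ⟨h, h'⟩)
      · by_cases hxm : x = m
        · subst hxm; exact hmax y hy (by omega)
        · exact big x y (by omega) (by omega) hy
      · have : x = j := by omega
        have : y = k := by omega
        rw [‹x = j›, ‹y = k›]; exact h2

def T132 {n : ℕ} (π : Equiv.Perm (Fin n)) (i j k : Fin n) : Prop :=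
  i < j ∧ j < k ∧ π i < π k ∧ π k < π j
def T321 {n : ℕ} (π : Equiv.Perm (Fin n)) (i j k : Fin n) : Prop :=
  i < j ∧ j < k ∧ π k < π j ∧ π j < π i
instance {n : ℕ} (π : Equiv.Perm (Fin n)) (i j k : Fin n) : Decidable (T132 π i j k) := by
  unfold T132; infer_instance
instance {n : ℕ} (π : Equiv.Perm (Fin n)) (i j k : Fin n) : Decidable (T321 π i j k) := by
  unfold T321; infer_instance
def Once {n : ℕ} (T : Fin n → Fin n → Fin n → Prop) : Prop :=
  (∃ i j k, T i j k) ∧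
    ∀ i j k i' j' k', T i j k → T i' j' k' → i = i' ∧ j = j' ∧ k = k'

theorem once_of_iff {n : ℕ} (α : Equiv.Perm (Fin 3)) (π : Equiv.Perm (Fin n))
    (T : Fin n → Fin n → Fin n → Prop)
    (h : ∀ f : Fin 3 → Fin n, (StrictMono f ∧ ∀ a b : Fin 3, α a < α b ↔ π (f a) < π (f b)) ↔
      T (f 0) (f 1) (f 2)) : containsOnce α π ↔ Once T := by
  unfold containsOnce occCount Once
  rw [Nat.card_eq_one_iff_unique]
  constructor
  · rintro ⟨hs, ⟨f, hf⟩⟩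
    refine ⟨⟨_, _, _, (h f).1 hf⟩, ?_⟩
    intro i j k i' j' k' h1 h2
    have e := hs.elim ⟨![i, j, k], (h _).2 h1⟩ ⟨![i', j', k'], (h _).2 h2⟩
    have e' := congrArg Subtype.val e
    exact ⟨congrFun e' 0, congrFun e' 1, congrFun e' 2⟩
  · rintro ⟨⟨i, j, k, h1⟩, hu⟩
    refine ⟨⟨?_⟩, ⟨⟨![i, j, k], (h _).2 h1⟩⟩⟩
    rintro ⟨f, hf⟩ ⟨g, hg⟩
    have e := hu _ _ _ _ _ _ ((h f).1 hf) ((h g).1 hg)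
    apply Subtype.ext
    funext a
    fin_cases a
    · exact e.1
    · exact e.2.1
    · exact e.2.2

theorem strictMono_three {n : ℕ} (f : Fin 3 → Fin n) : StrictMono f ↔ f 0 < f 1 ∧ f 1 < f 2 := by
  rw [Fin.strictMono_iff_lt_succ]
  simp [Fin.forall_fin_two]

theorem once132 {n : ℕ} (π : Equiv.Perm (Fin n)) : containsOnce p132 π ↔ Once (T132 π) := by
  apply once_of_iff
  intro f
  rw [strictMono_three]
  simp only [Fin.forall_fin_succ, T132, p132, Equiv.coe_fn_mk]
  simp
  constructor
  · rintro ⟨⟨_, _⟩, h⟩; omega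
  · intro h; omega

theorem once321 {n : ℕ} (π : Equiv.Perm (Fin n)) : containsOnce p321 π ↔ Once (T321 π) := by
  apply once_of_iff
  intro f
  rw [strictMono_three]
  simp only [Fin.forall_fin_succ, T321, p321, Equiv.coe_fn_mk]
  simp
  constructor
  · rintro ⟨⟨_, _⟩, h⟩; omega
  · intro h; omega

def Good {n : ℕ} (π : Equiv.Perm (Fin n)) : Prop := Once (T132 π) ∧ Once (T321 π)

theorem sContain_eq (n : ℕ) :
    sContainBoth p132 p321 n = Nat.card {π : Equiv.Perm (Fin n) // Good π} := by
  unfold sContainBoth Good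
  simp only [once132, once321]

/-! Symmetries -/
theorem occ_rev {k n : ℕ} (α : Equiv.Perm (Fin k)) (π : Equiv.Perm (Fin n)) :
    occCount (Fin.revPerm.trans α) (Fin.revPerm.trans π) = occCount α π := by
  unfold occCount
  have key : ∀ {k n : ℕ} (α : Equiv.Perm (Fin k)) (π : Equiv.Perm (Fin n)) (f : Fin k → Fin n),
      (StrictMono f ∧ ∀ a b : Fin k, (Fin.revPerm.trans α) a < (Fin.revPerm.trans α) b ↔
        (Fin.revPerm.trans π) (f a) < (Fin.revPerm.trans π) (f b)) →
      (StrictMono (fun a : Fin k => (f a.rev).rev) ∧ ∀ a b : Fin k, α a < α b ↔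
        π (f a.rev).rev < π (f b.rev).rev) := by
    rintro k n α π f ⟨h1, h2⟩
    refine ⟨fun a b hab => Fin.rev_lt_rev.2 (h1 (Fin.rev_lt_rev.2 hab)), fun a b => ?_⟩
    have := h2 a.rev b.rev
    simpa using this
  refine Nat.card_congr ⟨fun f => ⟨fun a => (f.1 a.rev).rev, key α π f.1 f.2⟩,
    fun f => ⟨fun a => (f.1 a.rev).rev, key _ _ f.1 ?_⟩, fun f => ?_, fun f => ?_⟩
  · simpa using f.2
  · ext; simp
  · ext; simp

theorem occ_compl {k n : ℕ} (α : Equiv.Perm (Fin k)) (π : Equiv.Perm (Fin n)) :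
    occCount (α.trans Fin.revPerm) (π.trans Fin.revPerm) = occCount α π := by
  unfold occCount
  refine Nat.card_congr (Equiv.subtypeEquivRight fun f => and_congr_right fun _ => ?_)
  simp only [Equiv.trans_apply, Fin.revPerm_apply, Fin.rev_lt_rev]
  exact ⟨fun h a b => h b a, fun h a b => h b a⟩

theorem both_rev (α β : Equiv.Perm (Fin 3)) (n : ℕ) :
    sContainBoth (Fin.revPerm.trans α) (Fin.revPerm.trans β) n = sContainBoth α β n := by
  unfold sContainBoth containsOnce
  symm
  refine Nat.card_congr (Equiv.subtypeEquiv ⟨fun π => Fin.revPerm.trans π,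
    fun π => Fin.revPerm.trans π, fun π => by ext; simp, fun π => by ext; simp⟩ fun π => ?_)
  simp [occ_rev]

theorem both_compl (α β : Equiv.Perm (Fin 3)) (n : ℕ) :
    sContainBoth (α.trans Fin.revPerm) (β.trans Fin.revPerm) n = sContainBoth α β n := by
  unfold sContainBoth containsOnce
  symm
  refine Nat.card_congr (Equiv.subtypeEquiv ⟨fun π => π.trans Fin.revPerm,
    fun π => π.trans Fin.revPerm, fun π => by ext; simp, fun π => by ext; simp⟩ fun π => ?_)
  simp [occ_compl]

theorem both_comm (α β : Equiv.Perm (Fin 3)) (n : ℕ) :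
    sContainBoth α β n = sContainBoth β α n := by
  unfold sContainBoth
  simp only [and_comm]

theorem both_a (n : ℕ) : sContainBoth p123 p231 n = sContainBoth p132 p321 n := by
  rw [both_comm p132, ← both_rev p321 p132]
  congr 1 <;> decide
theorem both_c (n : ℕ) : sContainBoth p213 p321 n = sContainBoth p132 p321 n := by
  rw [← both_rev p132 p321, ← both_compl]
  congr 1 <;> decide
theorem both_b (n : ℕ) : sContainBoth p123 p312 n = sContainBoth p132 p321 n := by
  rw [← both_c, both_comm p213, ← both_rev p321 p213]
  congr 1 <;> decide

/-! Appending the maximum -/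
def ext {n : ℕ} (e : Equiv.Perm (Fin n)) : Equiv.Perm (Fin (n + 1)) :=
  (finSuccEquivLast.trans (Equiv.optionCongr e)).trans finSuccEquivLast.symm

@[simp] theorem ext_castSucc {n : ℕ} (e : Equiv.Perm (Fin n)) (i : Fin n) :
    ext e i.castSucc = (e i).castSucc := by simp [ext]
@[simp] theorem ext_last {n : ℕ} (e : Equiv.Perm (Fin n)) :
    ext e (Fin.last n) = Fin.last n := by simp [ext]

theorem ext_inj {n : ℕ} : Function.Injective (ext (n := n)) := by
  intro e e' h
  apply Equiv.ext
  intro i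
  have := DFunLike.congr_fun h i.castSucc
  simpa using this

theorem ext_surj {n : ℕ} (π : Equiv.Perm (Fin (n + 1))) (h : π (Fin.last n) = Fin.last n) :
    ∃ e, ext e = π := by
  have hne : ∀ i : Fin n, π i.castSucc ≠ Fin.last n := by
    intro i hi
    rw [← h] at hi
    exact absurd (π.injective hi) (Fin.castSucc_lt_last i).ne
  let g : Fin n → Fin n := fun i => (π i.castSucc).castPred (hne i)
  have hg : Function.Injective g := by
    intro i j hij
    have : π i.castSucc = π j.castSucc := Fin.castPred_inj.1 hij
    exact Fin.castSucc_injective _ (π.injective this)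
  refine ⟨Equiv.ofBijective g (Finite.injective_iff_bijective.1 hg), ?_⟩
  apply Equiv.ext
  intro i
  refine Fin.lastCases ?_ (fun i => ?_) i
  · rw [ext_last, h]
  · rw [ext_castSucc]; simp [g]

theorem once_ext {n : ℕ} (T : Fin n → Fin n → Fin n → Prop)
    (T' : Fin (n + 1) → Fin (n + 1) → Fin (n + 1) → Prop)
    (h : ∀ i j k, T' i.castSucc j.castSucc k.castSucc ↔ T i j k)
    (h' : ∀ i j k, T' i j k → i < j ∧ j < k ∧ k ≠ Fin.last n) : Once T' ↔ Once T := by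
  have key : ∀ i j k, T' i j k → ∃ a b c : Fin n, a.castSucc = i ∧ b.castSucc = j ∧
      c.castSucc = k ∧ T a b c := by
    intro i j k ht
    obtain ⟨h1, h2, h3⟩ := h' i j k ht
    have hk : k < Fin.last n := Fin.lt_last_iff_ne_last.2 h3
    obtain ⟨c, rfl⟩ := Fin.exists_castSucc_eq.2 h3
    obtain ⟨b, rfl⟩ := Fin.exists_castSucc_eq.2 (h2.trans hk).ne
    obtain ⟨a, rfl⟩ := Fin.exists_castSucc_eq.2 (h1.trans (h2.trans hk)).ne
    exact ⟨a, b, c, rfl, rfl, rfl, (h _ _ _).1 ht⟩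
  constructor
  · rintro ⟨⟨i, j, k, ht⟩, hu⟩
    obtain ⟨a, b, c, -, -, -, hT⟩ := key i j k ht
    refine ⟨⟨a, b, c, hT⟩, fun i j k i' j' k' h1 h2 => ?_⟩
    have := hu _ _ _ _ _ _ ((h _ _ _).2 h1) ((h _ _ _).2 h2)
    simpa using this
  · rintro ⟨⟨i, j, k, ht⟩, hu⟩
    refine ⟨⟨_, _, _, (h i j k).2 ht⟩, fun i j k i' j' k' h1 h2 => ?_⟩
    obtain ⟨a, b, c, rfl, rfl, rfl, hT⟩ := key i j k h1
    obtain ⟨a', b', c', rfl, rfl, rfl, hT'⟩ := key _ _ _ h2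
    have := hu _ _ _ _ _ _ hT hT'
    simpa using this

theorem good_ext {n : ℕ} (e : Equiv.Perm (Fin n)) : Good (ext e) ↔ Good e := by
  unfold Good
  refine and_congr (once_ext _ _ ?_ ?_) (once_ext _ _ ?_ ?_)
  · intro i j k; simp [T132]
  · rintro i j k ⟨h1, h2, h3, h4⟩
    refine ⟨h1, h2, ?_⟩
    rintro rfl
    rw [ext_last] at h4
    exact absurd h4 (Fin.le_last _).not_gt
  · intro i j k; simp [T321]
  · rintro i j k ⟨h1, h2, h3, h4⟩
    refine ⟨h1, h2, ?_⟩
    rintro rfl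
    rw [ext_last] at h3
    exact absurd h3 (Fin.le_last _).not_gt

/-! Inversion sets -/
theorem eq_of_inv {n : ℕ} (π σ : Equiv.Perm (Fin n))
    (h : ∀ i j, i < j → (π j < π i ↔ σ j < σ i)) : π = σ := by
  have hlt : ∀ i j, σ i < σ j → π i < π j := by
    intro i j hs
    rcases lt_trichotomy i j with hij | rfl | hij
    · have := h i j hij
      by_contra hc
      rcases (not_lt.1 hc).lt_or_eq with h1 | h1
      · exact absurd (this.1 h1) hs.not_gt
      · exact hij.ne (π.injective h1.symm)
    · exact absurd hs (lt_irrefl _)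
    · exact (h j i hij).2 hs
  have hm : StrictMono (fun x => π (σ.symm x)) := by
    intro x y hxy
    exact hlt _ _ (by simpa using hxy)
  have hid : (fun x => π (σ.symm x)) = id := by
    let e : Fin n ≃o Fin n := hm.orderIsoOfSurjective _ (π.surjective.comp σ.symm.surjective)
    have : e = OrderIso.refl _ := Subsingleton.elim _ _
    funext x
    exact DFunLike.congr_fun this x
  apply Equiv.ext
  intro i
  simpa using congrFun hid (σ i)

def Q1 {n : ℕ} (π : Equiv.Perm (Fin n)) : Prop :=
  ∀ i j : Fin n, i < j → (π j < π i ↔ (i.val = 0 ∨ (i.val = 2 ∧ j.val = 3)))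
def Q2 {n : ℕ} (π : Equiv.Perm (Fin n)) : Prop :=
  ∀ i j : Fin n, i < j → (π j < π i ↔ (j.val = n - 1 ∨ (i.val = 1 ∧ j.val = 2)))

theorem not_inv_iff {n : ℕ} (π : Equiv.Perm (Fin n)) {i j : Fin n} (h : i < j) :
    π i < π j ↔ ¬ π j < π i := by
  have : π i ≠ π j := fun e => h.ne (π.injective e)
  rw [not_lt]
  exact ⟨le_of_lt, fun h' => lt_of_le_of_ne h' this⟩

theorem good_Q1 {n : ℕ} (hn : 6 ≤ n) (π : Equiv.Perm (Fin n)) (h : Q1 π) : Good π := by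
  refine ⟨⟨⟨⟨1, by omega⟩, ⟨2, by omega⟩, ⟨3, by omega⟩, by simp, by simp, ?_, ?_⟩, ?_⟩,
    ⟨⟨⟨0, by omega⟩, ⟨2, by omega⟩, ⟨3, by omega⟩, by simp, by simp, ?_, ?_⟩, ?_⟩⟩
  · rw [not_inv_iff _ (by simp), h _ _ (by simp)]; simp
  · rw [h _ _ (by simp)]; simp
  · have key : ∀ i j k, T132 π i j k → i.val = 1 ∧ j.val = 2 ∧ k.val = 3 := by
      rintro i j k ⟨a, b, c, d⟩
      rw [not_inv_iff _ (a.trans b), h _ _ (a.trans b)] at c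
      rw [h _ _ b] at d
      rw [Fin.lt_def] at a b
      omega
    intro i j k i' j' k' h1 h2
    have := key _ _ _ h1
    have := key _ _ _ h2
    simp only [Fin.ext_iff]; omega
  · rw [h _ _ (by simp)]; simp
  · rw [h _ _ (by simp)]; simp
  · have key : ∀ i j k, T321 π i j k → i.val = 0 ∧ j.val = 2 ∧ k.val = 3 := by
      rintro i j k ⟨a, b, c, d⟩
      rw [h _ _ b] at c
      rw [h _ _ a] at d
      rw [Fin.lt_def] at a b
      omega
    intro i j k i' j' k' h1 h2
    have := key _ _ _ h1
    have := key _ _ _ h2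
    simp only [Fin.ext_iff]; omega

theorem good_Q2 {n : ℕ} (hn : 6 ≤ n) (π : Equiv.Perm (Fin n)) (h : Q2 π) : Good π := by
  have l1 : (⟨0, by omega⟩ : Fin n) < ⟨1, by omega⟩ := by simp
  have l2 : (⟨1, by omega⟩ : Fin n) < ⟨2, by omega⟩ := by simp
  have l3 : (⟨2, by omega⟩ : Fin n) < ⟨n - 1, by omega⟩ := by simp [Fin.lt_def]; omega
  refine ⟨⟨⟨⟨0, by omega⟩, ⟨1, by omega⟩, ⟨2, by omega⟩, l1, l2, ?_, ?_⟩, ?_⟩,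
    ⟨⟨⟨1, by omega⟩, ⟨2, by omega⟩, ⟨n - 1, by omega⟩, l2, l3, ?_, ?_⟩, ?_⟩⟩
  · rw [not_inv_iff _ (l1.trans l2), h _ _ (l1.trans l2)]; simp; omega
  · rw [h _ _ l2]; simp
  · have key : ∀ i j k, T132 π i j k → i.val = 0 ∧ j.val = 1 ∧ k.val = 2 := by
      rintro i j k ⟨a, b, c, d⟩
      rw [not_inv_iff _ (a.trans b), h _ _ (a.trans b)] at c
      rw [h _ _ b] at d
      rw [Fin.lt_def] at a b
      omega
    intro i j k i' j' k' h1 h2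
    have := key _ _ _ h1
    have := key _ _ _ h2
    simp only [Fin.ext_iff]; omega
  · rw [h _ _ l3]; simp
  · rw [h _ _ l2]; simp
  · have key : ∀ i j k, T321 π i j k → i.val = 1 ∧ j.val = 2 ∧ k.val = n - 1 := by
      rintro i j k ⟨a, b, c, d⟩
      rw [h _ _ b] at c
      rw [h _ _ a] at d
      rw [Fin.lt_def] at a b
      omega
    intro i j k i' j' k' h1 h2
    have := key _ _ _ h1
    have := key _ _ _ h2
    simp only [Fin.ext_iff]; omega

theorem rot_val {n : ℕ} (i : Fin (n + 1)) :
    (finRotate (n + 1) i).val = if i.val = n then 0 else i.val + 1 := by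
  rw [coe_finRotate]
  simp [Fin.ext_iff]

def sw {n : ℕ} (a b : ℕ) (ha : a < n) (hb : b < n) : Equiv.Perm (Fin n) :=
  Equiv.swap ⟨a, ha⟩ ⟨b, hb⟩

theorem sw_val {n : ℕ} (a b : ℕ) (ha : a < n) (hb : b < n) (i : Fin n) :
    (sw a b ha hb i).val = if i.val = a then b else if i.val = b then a else i.val := by
  unfold sw
  rw [Equiv.swap_apply_def]
  simp only [Fin.ext_iff]
  split_ifs <;> rfl

theorem rot_symm_val {n : ℕ} (i : Fin (n + 1)) :
    ((finRotate (n + 1)).symm i).val = if i.val = 0 then n else i.val - 1 := by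
  obtain ⟨j, rfl⟩ := (finRotate (n + 1)).surjective i
  have := j.2
  rw [Equiv.symm_apply_apply, rot_val]
  grind

theorem exists_Q1 {n : ℕ} (hn : 5 ≤ n) : ∃ π : Equiv.Perm (Fin (n + 1)), Q1 π := by
  refine ⟨(sw 2 3 (by omega) (by omega)).trans (finRotate (n + 1)).symm, ?_⟩
  intro i j hij
  have hi := i.2
  have hj := j.2
  rw [Fin.lt_def] at hij ⊢
  rw [Equiv.trans_apply, Equiv.trans_apply, rot_symm_val, rot_symm_val, sw_val, sw_val]
  grind

theorem exists_Q2 {n : ℕ} (hn : 5 ≤ n) : ∃ π : Equiv.Perm (Fin (n + 1)), Q2 π := by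
  refine ⟨(sw 1 2 (by omega) (by omega)).trans (finRotate (n + 1)), ?_⟩
  intro i j hij
  have hi := i.2
  have hj := j.2
  rw [Fin.lt_def] at hij ⊢
  rw [Equiv.trans_apply, Equiv.trans_apply, rot_val, rot_val, sw_val, sw_val]
  grind

theorem good_cases {n : ℕ} (hn : 5 ≤ n) (π : Equiv.Perm (Fin (n + 1))) (hg : Good π) :
    π (Fin.last n) = Fin.last n ∨ Q1 π ∨ Q2 π := by
  by_cases hl : π (Fin.last n) = Fin.last n
  · exact Or.inl hl
  right
  obtain ⟨m, hm⟩ := π.surjective (Fin.last n)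
  have hml : m ≠ Fin.last n := by rintro rfl; exact hl hm
  let f : ℕ → ℕ := fun i => if h : i < n + 1 then (π ⟨i, h⟩).val else 0
  have hf : ∀ i (h : i < n + 1), f i = (π ⟨i, h⟩).val := fun i h => dif_pos h
  obtain ⟨⟨⟨i, j, k, a1, a2, a3, a4⟩, u⟩, ⟨⟨i', j', k', b1, b2, b3, b4⟩, u'⟩⟩ := hg
  have key := key_case (n + 1) (by omega) f ?_ m.val ?_ ?_ ?_ ?_ ?_ ?_
  · rcases key with key | key
    · left
      intro i j hij
      have := key i.val j.val hij j.2
      rwa [hf _ i.2, hf _ j.2] at this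
    · right
      intro i j hij
      have := key i.val j.val hij j.2
      rwa [hf _ i.2, hf _ j.2] at this
  · intro i j hi hj h
    rw [hf _ hi, hf _ hj] at h
    simpa using π.injective (Fin.ext h)
  · have := Fin.lt_last_iff_ne_last.2 hml
    rw [Fin.lt_def] at this
    simp at this; omega
  · intro i hi hne
    rw [hf _ hi, hf _ m.2]
    have : π ⟨i, hi⟩ ≠ π m := fun e => hne (congrArg Fin.val (π.injective e))
    rw [hm] at this
    have h2 := Fin.lt_last_iff_ne_last.2 this
    change (π ⟨i, hi⟩).val < (π m).val
    rw [hm]; exact h2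
  · exact ⟨i, j, k, a1, a2, k.2, by rw [hf _ i.2, hf _ k.2]; exact a3,
      by rw [hf _ j.2, hf _ k.2]; exact a4⟩
  · exact ⟨i', j', k', b1, b2, k'.2, by rw [hf _ j'.2, hf _ k'.2]; exact b3,
      by rw [hf _ j'.2, hf _ i'.2]; exact b4⟩
  · intro i j k i' j' k' h1 h2 h3 h4 h5 g1 g2 g3 g4 g5
    rw [hf i (by omega), hf k (by omega)] at h4
    rw [hf j (by omega), hf k (by omega)] at h5
    rw [hf i' (by omega), hf k' (by omega)] at g4
    rw [hf j' (by omega), hf k' (by omega)] at g5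
    have := u _ _ _ _ _ _ ⟨h1, h2, h4, h5⟩ ⟨g1, g2, g4, g5⟩
    simpa using this
  · intro i j k i' j' k' h1 h2 h3 h4 h5 g1 g2 g3 g4 g5
    rw [hf j (by omega), hf k (by omega)] at h4
    rw [hf j (by omega), hf i (by omega)] at h5
    rw [hf j' (by omega), hf k' (by omega)] at g4
    rw [hf j' (by omega), hf i' (by omega)] at g5
    have := u' _ _ _ _ _ _ ⟨h1, h2, h4, h5⟩ ⟨g1, g2, g4, g5⟩
    simpa using this

theorem count_step {n : ℕ} (hn : 5 ≤ n) :
    Nat.card {π : Equiv.Perm (Fin (n + 1)) // Good π} =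
      Nat.card {π : Equiv.Perm (Fin n) // Good π} + 2 := by
  obtain ⟨s1, hs1⟩ := exists_Q1 hn
  obtain ⟨s2, hs2⟩ := exists_Q2 hn
  have hne : s1 ≠ s2 := by
    rintro rfl
    have h1 := hs1 ⟨0, by omega⟩ ⟨1, by omega⟩ (by simp [Fin.lt_def])
    have h2 := hs2 ⟨0, by omega⟩ ⟨1, by omega⟩ (by simp [Fin.lt_def])
    rw [h1] at h2
    simp at h2; omega
  have last_ne : ∀ e : Equiv.Perm (Fin n), ext e ≠ s1 ∧ ext e ≠ s2 := by
    intro e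
    constructor
    · rintro rfl
      have h1 := (hs1 ⟨0, by omega⟩ (Fin.last n) (by simp [Fin.lt_def]; omega)).2 (Or.inl rfl)
      rw [ext_last] at h1
      exact absurd h1 (Fin.le_last _).not_gt
    · rintro rfl
      have h1 := (hs2 ⟨0, by omega⟩ (Fin.last n) (by simp [Fin.lt_def]; omega)).2
        (Or.inl (by simp))
      rw [ext_last] at h1
      exact absurd h1 (Fin.le_last _).not_gt
  have hset : {π : Equiv.Perm (Fin (n + 1)) | Good π} =
      insert s1 (insert s2 (ext '' {π : Equiv.Perm (Fin n) | Good π})) := by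
    apply Set.ext
    intro π
    simp only [Set.mem_ofPred_eq, Set.mem_insert_iff, Set.mem_image]
    constructor
    · intro hg
      rcases good_cases hn π hg with h | h | h
      · obtain ⟨e, rfl⟩ := ext_surj π h
        exact Or.inr (Or.inr ⟨e, (good_ext e).1 hg, rfl⟩)
      · exact Or.inl (eq_of_inv _ _ fun i j hij => (h i j hij).trans (hs1 i j hij).symm)
      · exact Or.inr (Or.inl (eq_of_inv _ _ fun i j hij => (h i j hij).trans (hs2 i j hij).symm))
    · rintro (rfl | rfl | ⟨e, he, rfl⟩)
      · exact good_Q1 (by omega) _ hs1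
      · exact good_Q2 (by omega) _ hs2
      · exact (good_ext e).2 he
  have e1 : Nat.card {π : Equiv.Perm (Fin (n + 1)) // Good π} =
      {π : Equiv.Perm (Fin (n + 1)) | Good π}.ncard := rfl
  have e2 : Nat.card {π : Equiv.Perm (Fin n) // Good π} =
      {π : Equiv.Perm (Fin n) | Good π}.ncard := rfl
  rw [e1, e2, hset, Set.ncard_insert_of_notMem, Set.ncard_insert_of_notMem,
    Set.ncard_image_of_injective _ ext_inj]
  · rintro ⟨e, -, he⟩
    exact (last_ne e).2 he
  · rintro (h | ⟨e, -, he⟩)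
    · exact hne h
    · exact (last_ne e).1 he

/-! Base cases -/
def cnt {n : ℕ} (T : Fin n → Fin n → Fin n → Prop) [∀ i j k, Decidable (T i j k)] : ℕ :=
  (Finset.univ.filter fun t : Fin n × Fin n × Fin n => T t.1 t.2.1 t.2.2).card

theorem once_cnt {n : ℕ} (T : Fin n → Fin n → Fin n → Prop) [∀ i j k, Decidable (T i j k)] :
    Once T ↔ cnt T = 1 := by
  unfold cnt Once
  rw [Finset.card_eq_one]
  constructor
  · rintro ⟨⟨i, j, k, h⟩, hu⟩
    refine ⟨(i, j, k), ?_⟩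
    apply Finset.ext
    rintro ⟨a, b, c⟩
    simp only [Finset.mem_filter, Finset.mem_univ, true_and, Finset.mem_singleton, Prod.mk.injEq]
    constructor
    · intro h'; exact hu _ _ _ _ _ _ h' h
    · rintro ⟨rfl, rfl, rfl⟩; exact h
  · rintro ⟨⟨a, b, c⟩, h⟩
    have key : ∀ i j k, T i j k ↔ i = a ∧ j = b ∧ k = c := by
      intro i j k
      have := Finset.ext_iff.1 h (i, j, k)
      simpa using this
    refine ⟨⟨a, b, c, (key _ _ _).2 ⟨rfl, rfl, rfl⟩⟩, ?_⟩
    intro i j k i' j' k' h1 h2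
    obtain ⟨rfl, rfl, rfl⟩ := (key _ _ _).1 h1
    obtain ⟨rfl, rfl, rfl⟩ := (key _ _ _).1 h2
    exact ⟨rfl, rfl, rfl⟩

theorem count_fin (n : ℕ) : Nat.card {π : Equiv.Perm (Fin n) // Good π} =
    (Finset.univ.filter fun π : Equiv.Perm (Fin n) => cnt (T132 π) = 1 ∧ cnt (T321 π) = 1).card := by
  unfold Good
  simp only [once_cnt]
  rw [Nat.card_eq_fintype_card, Fintype.card_subtype]

theorem count_four : Nat.card {π : Equiv.Perm (Fin 4) // Good π} = 2 := by
  rw [count_fin]; decide +kernel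

theorem count_five : Nat.card {π : Equiv.Perm (Fin 5) // Good π} = 5 := by
  rw [count_fin]; decide +kernel

theorem count_all (n : ℕ) (hn : 5 ≤ n) :
    Nat.card {π : Equiv.Perm (Fin n) // Good π} = 2 * n - 5 := by
  induction n, hn using Nat.le_induction with
  | base => exact count_five
  | succ n hn ih => rw [count_step hn, ih]; omega

/-- Theorem 5.2: for each listed pair `{α,β}`, `s_n(∅;{α,β}) = 2n−5` for `n ≥ 5`,
and `s_4(∅;{α,β}) = 2`. -/
theorem sContainBoth_eq_of_mem_classG :
    ∀ p ∈ [(p123, p231), (p123, p312), (p132, p321), (p213, p321)],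
      (∀ n : ℕ, 5 ≤ n → sContainBoth p.1 p.2 n = 2 * n - 5) ∧
        sContainBoth p.1 p.2 4 = 2 := by
  have main : ∀ α β : Equiv.Perm (Fin 3),
      (∀ n, sContainBoth α β n = sContainBoth p132 p321 n) →
      (∀ n : ℕ, 5 ≤ n → sContainBoth α β n = 2 * n - 5) ∧ sContainBoth α β 4 = 2 := by
    intro α β h
    refine ⟨fun n hn => ?_, ?_⟩
    · rw [h, sContain_eq, count_all n hn]
    · rw [h, sContain_eq, count_four]
  intro p hp
  simp only [List.mem_cons, List.not_mem_nil, or_false] at hp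
  rcases hp with rfl | rfl | rfl | rfl
  · exact main _ _ both_a
  · exact main _ _ both_b
  · exact main _ _ fun _ => rfl
  · exact main _ _ both_c
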